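/- Fix n ≥ 1 and for 0 ≤ j ≤ n let A_j be the 0-1 matrix indexed by (ZMod 2)^n with (A_j)_{x,y} = 1 if and only if the Hamming distance of x and y is j. Let 0 ≤ m ≤ n, let c_0, …, c_m be real numbers, and let f : {0, 1, …, n} → ℝ satisfy f(j) = Σ_{i=0}^{m} c_i K_i(j) for all 0 ≤ j ≤ n, where K_i(j) = Σ_{h=0}^{i} (-1)^h C(j, h) C(n-j, i-h). Then the rank of X = Σ_{j=0}^{n} f(j) A_j is at most Σ_{i=0}^{m} C(n, i). -/

import Mathlib

open Finset Matrix

/-- The Krawtchouk polynomial value `K_i(j; n)`. -/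
noncomputable def krawtchouk (n i j : ℕ) : ℝ :=
  ∑ h ∈ Finset.range (i + 1),
    (-1 : ℝ) ^ h * (Nat.choose j h) * (Nat.choose (n - j) (i - h))

/-- The distance-`j` adjacency matrix of the hypercube `(ZMod 2)^n`. -/
def hypercubeAdj (n j : ℕ) : Matrix (Fin n → ZMod 2) (Fin n → ZMod 2) ℝ :=
  fun x y => if hammingDist x y = j then 1 else 0

/-!
The characters `χ_S` of `(ZMod 2)^n` diagonalise every matrix that depends only on the Hamming
distance: counting the `i`-subsets `S` of the coordinates by the size of their intersection with
`{k | x k ≠ y k}` gives `K_i(d(x, y)) = ∑_{#S = i} χ_S(x) χ_S(y)`. Each degree `i` in the Krawtchouk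
expansion of `f` therefore contributes `C(n, i)` rank-one matrices to `∑_j f(j) A_j`.
-/

lemma rank_sum_vecMulVec_le_card {R m n κ : Type*} [CommSemiring R] [StrongRankCondition R]
    [Fintype n] (s : Finset κ) (u : κ → m → R) (v : κ → n → R) :
    (∑ a ∈ s, vecMulVec (u a) (v a)).rank ≤ #s := by
  let U : Matrix m s R := Matrix.of fun x a => u a x
  let V : Matrix s n R := Matrix.of fun a y => v a y
  have hfactor : ∑ a ∈ s, vecMulVec (u a) (v a) = U * V := by
    ext x y
    rw [Matrix.sum_apply, Matrix.mul_apply]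
    exact (sum_coe_sort s fun a => u a x * v a y).symm
  calc (∑ a ∈ s, vecMulVec (u a) (v a)).rank
      = (U * V).rank := by rw [hfactor]
    _ ≤ U.rank := rank_mul_le_left U V
    _ ≤ Fintype.card s := rank_le_card_width U
    _ = #s := Fintype.card_coe s

lemma filter_union_eq_left {α : Type*} [DecidableEq α] {p : α → Prop} [DecidablePred p]
    {T U : Finset α} (hT : ∀ a ∈ T, p a) (hU : ∀ a ∈ U, ¬ p a) : {a ∈ T ∪ U | p a} = T := by
  rw [filter_union, filter_true_of_mem hT, filter_false_of_mem hU, union_empty]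

lemma card_filter_powersetCard_card_filter_eq {α : Type*} (s : Finset α) (p : α → Prop)
    [DecidablePred p] {i h : ℕ} (hi : h ≤ i) :
    #{S ∈ s.powersetCard i | #{a ∈ S | p a} = h} =
      (#{a ∈ s | p a}).choose h * (#{a ∈ s | ¬ p a}).choose (i - h) := by
  classical
  have hrecover : ∀ T ∈ powersetCard h {a ∈ s | p a}, ∀ U ∈ powersetCard (i - h) {a ∈ s | ¬ p a},
      {a ∈ T ∪ U | p a} = T ∧ {a ∈ T ∪ U | ¬ p a} = U := by
    intro T hT U hU
    have hTp : ∀ a ∈ T, p a := fun a ha => (mem_filter.1 ((mem_powersetCard.1 hT).1 ha)).2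
    have hUp : ∀ a ∈ U, ¬ p a := fun a ha => (mem_filter.1 ((mem_powersetCard.1 hU).1 ha)).2
    refine ⟨filter_union_eq_left hTp hUp, ?_⟩
    rw [union_comm]
    exact filter_union_eq_left hUp fun a ha => not_not_intro (hTp a ha)
  rw [← card_powersetCard, ← card_powersetCard, ← card_product]
  refine card_nbij' (fun S => ({a ∈ S | p a}, {a ∈ S | ¬ p a})) (fun T => T.1 ∪ T.2) ?_ ?_ ?_ ?_
  · intro S hS
    obtain ⟨hS, hSh : #{a ∈ S | p a} = h⟩ := mem_filter.1 hS
    obtain ⟨hSs, hSi⟩ := mem_powersetCard.1 hS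
    have hSk : #{a ∈ S | ¬ p a} = i - h := by
      rw [← hSi, ← card_filter_add_card_filter_not (s := S) p, hSh, Nat.add_sub_cancel_left]
    exact mem_product.2 ⟨mem_powersetCard.2 ⟨filter_subset_filter _ hSs, hSh⟩,
      mem_powersetCard.2 ⟨filter_subset_filter _ hSs, hSk⟩⟩
  · rintro ⟨T, U⟩ hTU
    obtain ⟨hT, hU⟩ := mem_product.1 hTU
    obtain ⟨hTp, hUp⟩ := hrecover T hT U hU
    obtain ⟨hTs, hTh : #T = h⟩ := mem_powersetCard.1 hT
    obtain ⟨hUs, hUk : #U = i - h⟩ := mem_powersetCard.1 hU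
    have hsub : T ∪ U ⊆ s :=
      union_subset (hTs.trans (filter_subset _ s)) (hUs.trans (filter_subset _ s))
    have hcard : #(T ∪ U) = i := by
      rw [← card_filter_add_card_filter_not p, hTp, hUp, hTh, hUk, Nat.add_sub_cancel' hi]
    exact mem_filter.2 ⟨mem_powersetCard.2 ⟨hsub, hcard⟩, hTp.symm ▸ hTh⟩
  · exact fun S _ => filter_union_filter_not_eq p S
  · rintro ⟨T, U⟩ hTU
    obtain ⟨hT, hU⟩ := mem_product.1 hTU
    exact Prod.ext (hrecover T hT U hU).1 (hrecover T hT U hU).2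

lemma krawtchouk_card_filter {α : Type*} (s : Finset α) (p : α → Prop) [DecidablePred p] (i : ℕ) :
    krawtchouk #s i #{a ∈ s | p a} = ∑ S ∈ s.powersetCard i, (-1 : ℝ) ^ #{a ∈ S | p a} := by
  have hcompl : #s - #{a ∈ s | p a} = #{a ∈ s | ¬ p a} := by
    rw [← card_filter_add_card_filter_not (s := s) p, Nat.add_sub_cancel_left]
  have hmaps : ∀ S ∈ s.powersetCard i, #{a ∈ S | p a} ∈ range (i + 1) := fun S hS =>
    mem_range_succ_iff.2 <| (card_filter_le S p).trans_eq (mem_powersetCard.1 hS).2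
  rw [krawtchouk, hcompl, ← sum_fiberwise_of_maps_to hmaps]
  refine sum_congr rfl fun h hh => ?_
  calc (-1 : ℝ) ^ h * (#{a ∈ s | p a}).choose h * (#{a ∈ s | ¬ p a}).choose (i - h)
      = #{S ∈ s.powersetCard i | #{a ∈ S | p a} = h} * (-1 : ℝ) ^ h := by
        rw [card_filter_powersetCard_card_filter_eq s p (mem_range_succ_iff.1 hh)]
        push_cast
        ring
    _ = ∑ S ∈ s.powersetCard i with #{a ∈ S | p a} = h, (-1 : ℝ) ^ #{a ∈ S | p a} := by
        rw [← nsmul_eq_mul, ← sum_const]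
        exact sum_congr rfl fun S hS => by rw [(mem_filter.1 hS).2]

/-- The character `x ↦ (-1) ^ ∑ k ∈ S, x k` of `(ZMod 2)^ι`. Indexing by the set `S`, rather than by
its indicator vector, makes the weight of the character the cardinality of `S`. -/
def cubeCharacter {ι : Type*} (S : Finset ι) (x : ι → ZMod 2) : ℝ :=
  ∏ k ∈ S, if x k = 0 then 1 else -1

lemma cubeCharacter_mul_cubeCharacter {ι : Type*} (S : Finset ι) (x y : ι → ZMod 2) :
    cubeCharacter S x * cubeCharacter S y = (-1) ^ #{k ∈ S | x k ≠ y k} := by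
  have hsign : ∀ a b : ZMod 2, ((if a = 0 then 1 else -1) * (if b = 0 then 1 else -1) : ℝ) =
      if a ≠ b then -1 else 1 := by
    have hbit : ∀ a : ZMod 2, a = 0 ∨ a = 1 := by decide
    intro a b
    rcases hbit a with rfl | rfl <;> rcases hbit b with rfl | rfl <;> simp
  simp only [cubeCharacter, ← prod_mul_distrib, hsign, ← prod_filter, prod_const]

lemma krawtchouk_hammingDist {ι : Type*} [Fintype ι] (i : ℕ) (x y : ι → ZMod 2) :
    krawtchouk (Fintype.card ι) i (hammingDist x y) =
      ∑ S ∈ univ.powersetCard i, cubeCharacter S x * cubeCharacter S y := by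
  simp only [cubeCharacter_mul_cubeCharacter]
  exact krawtchouk_card_filter univ (fun k => x k ≠ y k) i

lemma hammingDist_le_of_fin {n : ℕ} {β : Fin n → Type*} [∀ k, DecidableEq (β k)]
    (x y : ∀ k, β k) : hammingDist x y ≤ n :=
  hammingDist_le_card_fintype.trans_eq (Fintype.card_fin n)

lemma sum_smul_hypercubeAdj_apply (n : ℕ) (f : ℕ → ℝ) (x y : Fin n → ZMod 2) :
    (∑ j ∈ range (n + 1), f j • hypercubeAdj n j) x y = f (hammingDist x y) := by
  have hdist : hammingDist x y < n + 1 := Nat.lt_succ_of_le (hammingDist_le_of_fin x y)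
  simp [Matrix.sum_apply, hypercubeAdj, hdist]

theorem rank_le_of_low_degree_general (n : ℕ) (I : Finset ℕ) (c f : ℕ → ℝ)
    (hf : ∀ j ≤ n, f j = ∑ i ∈ I, c i * krawtchouk n i j) :
    (∑ j ∈ range (n + 1), f j • hypercubeAdj n j).rank ≤ ∑ i ∈ I, n.choose i := by
  let T : Finset (Σ _ : ℕ, Finset (Fin n)) := I.sigma fun i => univ.powersetCard i
  have hexpand : ∑ j ∈ range (n + 1), f j • hypercubeAdj n j =
      ∑ t ∈ T, vecMulVec (c t.1 • cubeCharacter t.2) (cubeCharacter t.2) := by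
    ext x y
    have haddition (i : ℕ) : krawtchouk n i (hammingDist x y) =
        ∑ S ∈ univ.powersetCard i, cubeCharacter S x * cubeCharacter S y := by
      rw [← krawtchouk_hammingDist, Fintype.card_fin]
    rw [sum_smul_hypercubeAdj_apply, hf _ (hammingDist_le_of_fin x y)]
    simp only [haddition, mul_sum, T, sum_sigma, Matrix.sum_apply, vecMulVec_apply,
      Pi.smul_apply, smul_eq_mul, mul_assoc]
  calc (∑ j ∈ range (n + 1), f j • hypercubeAdj n j).rank
      ≤ #T := hexpand ▸ rank_sum_vecMulVec_le_card T _ _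
    _ = ∑ i ∈ I, n.choose i := by simp [T]

theorem rank_le_of_low_degree (n : ℕ) (hn : 1 ≤ n) (m : ℕ) (hm : m ≤ n)
    (c : ℕ → ℝ) (f : ℕ → ℝ)
    (hf : ∀ j ≤ n, f j = ∑ i ∈ Finset.range (m + 1), c i * krawtchouk n i j) :
    (∑ j ∈ Finset.range (n + 1), f j • hypercubeAdj n j).rank ≤
      ∑ i ∈ Finset.range (m + 1), Nat.choose n i :=
  rank_le_of_low_degree_general n (range (m + 1)) c f hf
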